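/- arXiv:1801.04991 — 2 statements merged into one kernel-verified Lean document; each statement's English description precedes it below -/
import Mathlib

section
/- Leafication does not increase delay: Let (W,A,μ) be a schedule and let y ∈ W∖{r} be a vertex of out-degree 1, with incident arcs (x,y),(y,z) ∈ A. Let y' ∉ W be a new vertex and define the schedule (W',A',μ') by W' := W ∪ {y'}, A' := (A ∖ {(x,y),(y,z)}) ∪ {(x,y'),(y',y),(y',z)}, μ'(u) := μ(u) for u ∈ W and μ'(y') := μ(y). Then (W',A',μ') is a schedule and delay(W',A',μ') ≤ delay(W,A,μ). -/
/-- A vehicle-routing instance: a finite set `P` of items, a root `r ∉ P`,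
a placement `μ₀` of root and items in a metric space `M`, a delivery time
`δ ≥ 1`, and a deadline `Δ > 0`. -/
structure VRInstance (α M : Type*) [MetricSpace M] where
  P : Finset α
  r : α
  r_not_item : r ∉ P
  P_nonempty : P.Nonempty
  μ₀ : α → M
  δ : ℝ
  one_le_δ : 1 ≤ δ
  Δ : ℝ
  Δ_pos : 0 < Δ

variable {α M : Type*} [MetricSpace M]

/-- A schedule: a finite arborescence `(W, A)` rooted at `I.r` with
`{r} ∪ P ⊆ W`, out-degree at most 2 everywhere, out-degree at most 1 on items,
together with a placement `μ : W → M` extending `μ₀` on `{r} ∪ P`. -/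
structure Schedule {α M : Type*} [MetricSpace M] (I : VRInstance α M) where
  W : Set α
  A : Set (α × α)
  μ : α → M
  finite_W : W.Finite
  root_mem : I.r ∈ W
  items_subset : ↑I.P ⊆ W
  arcs_subset : ∀ a ∈ A, a.1 ∈ W ∧ a.2 ∈ W
  no_arc_into_root : ∀ u, (u, I.r) ∉ A
  unique_in_arc : ∀ v ∈ W, v ≠ I.r → ∃! u, (u, v) ∈ A
  reachable : ∀ v ∈ W, Relation.ReflTransGen (fun u w => (u, w) ∈ A) I.r v
  outdeg_le_two : ∀ v ∈ W, {x | (v, x) ∈ A}.ncard ≤ 2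
  items_outdeg_le_one : ∀ p ∈ I.P, {x | (p, x) ∈ A}.ncard ≤ 1
  μ_placement : ∀ v ∈ insert I.r (↑I.P : Set α), μ v = I.μ₀ v

namespace Schedule

variable {I : VRInstance α M} (S : Schedule I)

/-- Reachability along arcs of the schedule. -/
def reach (u v : α) : Prop := Relation.ReflTransGen (fun a b => (a, b) ∈ S.A) u v

/-- `W_{x*}`: the vertex set of the maximal subarborescence rooted at `x`. -/
def desc (x : α) : Set α := {y ∈ S.W | S.reach x y}

/-- `W_{ry}`: the vertex set of the directed `r`–`y` path. -/
def pathSet (y : α) : Set α := {u ∈ S.W | S.reach I.r u ∧ S.reach u y}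

/-- The arcs on the directed `r`–`y` path. -/
def pathArcs (y : α) : Set (α × α) :=
  {a ∈ S.A | a.1 ∈ S.pathSet y ∧ a.2 ∈ S.pathSet y}

/-- Out-degree of a vertex. -/
noncomputable def outDeg (v : α) : ℕ := {x | (v, x) ∈ S.A}.ncard

/-- The handover delay at a bifurcation node `w`:
`min_{x child of w} |P ∩ W_{x*}|`. -/
noncomputable def handover (w : α) : ℕ :=
  sInf {k : ℕ | ∃ x, (w, x) ∈ S.A ∧ k = ((↑I.P : Set α) ∩ S.desc x).ncard}

/-- The delay of vertex `y`: travel time along the `r`–`y` path, plus delivery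
time `δ` for each item on the path, plus handover delays at bifurcation nodes
on the path. -/
noncomputable def delayTo (y : α) : ℝ :=
  (∑ᶠ a ∈ S.pathArcs y, dist (S.μ a.1) (S.μ a.2))
    + I.δ * ((↑I.P : Set α) ∩ S.pathSet y).ncard
    + ∑ᶠ w ∈ {u ∈ S.pathSet y | S.outDeg u = 2}, (S.handover w : ℝ)

/-- The delay of the schedule: the maximum delay of an item. -/
noncomputable def delay : ℝ := I.P.sup' I.P_nonempty fun p => S.delayTo p

/-- A schedule is feasible if its delay is at most the deadline. -/
def Feasible : Prop := S.delay ≤ I.Δ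

/-- The length (travel cost) of the schedule. -/
noncomputable def length : ℝ := ∑ᶠ a ∈ S.A, dist (S.μ a.1) (S.μ a.2)

/-- The leaves of the schedule (one vehicle per leaf). -/
def leaves : Set α := {v ∈ S.W | S.outDeg v = 0}

/-- The cost of the schedule for setup cost `σ`: length plus `σ` per vehicle. -/
noncomputable def cost (σ : ℝ) : ℝ := S.length + σ * S.leaves.ncard

end Schedule

/-- The minimum length of a tree with vertex set `{r} ∪ P`,
with edges weighted by the metric distance. -/
noncomputable def mstLength [DecidableEq α] (I : VRInstance α M) : ℝ :=
  sInf {x : ℝ | ∃ T : SimpleGraph ↥(insert I.r I.P), T.IsTree ∧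
    x = ∑ᶠ e ∈ T.edgeSet,
      (Sym2.lift ⟨fun u v => dist (I.μ₀ u) (I.μ₀ v), fun u v => dist_comm _ _⟩ : Sym2 ↥(insert I.r I.P) → ℝ) e}

theorem finsum_mem_le_finsum_mem_of_injOn {ι κ : Type*} {s : Set ι} {t : Set κ} (ht : t.Finite)
    {f : ι → ℝ} {h : κ → ℝ} (g : ι → κ) (hg : Set.MapsTo g s t) (hinj : Set.InjOn g s)
    (hfh : ∀ i ∈ s, f i ≤ h (g i)) (hh : ∀ j ∈ t, 0 ≤ h j) :
    ∑ᶠ i ∈ s, f i ≤ ∑ᶠ j ∈ t, h j := by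
  classical
  have hs : s.Finite := Set.Finite.of_injOn hg hinj ht
  rw [finsum_mem_eq_finite_toFinset_sum _ hs, finsum_mem_eq_finite_toFinset_sum _ ht]
  calc ∑ i ∈ hs.toFinset, f i ≤ ∑ i ∈ hs.toFinset, h (g i) :=
        Finset.sum_le_sum fun i hi => hfh i (by simpa using hi)
    _ = ∑ j ∈ hs.toFinset.image g, h j := by
        rw [Finset.sum_image]
        intro a ha b hb
        exact hinj (by simpa using ha) (by simpa using hb)
    _ ≤ ∑ j ∈ ht.toFinset, h j := by
        refine Finset.sum_le_sum_of_subset_of_nonneg ?_ fun j hj _ => hh j (by simpa using hj)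
        intro j hj
        obtain ⟨i, hi, rfl⟩ := Finset.mem_image.1 hj
        exact ht.mem_toFinset.2 (hg (hs.mem_toFinset.1 hi))

namespace Schedule

variable {I : VRInstance α M} (S : Schedule I)

theorem finite_pathSet (v : α) : (S.pathSet v).Finite :=
  S.finite_W.subset fun _ h => h.1

theorem finite_pathArcs (v : α) : (S.pathArcs v).Finite :=
  (S.finite_W.prod S.finite_W).subset fun a h => S.arcs_subset a h.1

theorem arc_tail_unique {u v w : α} (hu : (u, w) ∈ S.A) (hv : (v, w) ∈ S.A) : u = v :=
  (S.unique_in_arc w (S.arcs_subset _ hu).2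
    (fun h => S.no_arc_into_root u (h ▸ hu))).unique hu hv

theorem not_reach_of_arc {u v : α} (huv : (u, v) ∈ S.A) : ¬ S.reach v u := by
  have key : ∀ w, S.reach I.r w → ∀ t, (t, w) ∈ S.A → ¬ S.reach w t := by
    intro w hw
    induction hw with
    | refl => exact fun u hu => absurd hu (S.no_arc_into_root u)
    | @tail b c _ hbc ih =>
      intro u hu hcu
      obtain rfl := S.arc_tail_unique hu hbc
      rcases Relation.ReflTransGen.cases_tail hcu with h | ⟨d, hcd, hdu⟩
      · exact ih u (by simpa [h] using hu) .refl
      · exact ih d hdu (.head hbc hcd)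
  exact key v (S.reachable v (S.arcs_subset _ huv).2) u huv

theorem desc_eq_setOf_reach {v : α} (hv : v ∈ S.W) : S.desc v = {u | S.reach v u} := by
  ext u
  refine ⟨fun h => h.2, fun h => ⟨?_, h⟩⟩
  rcases Relation.ReflTransGen.cases_tail h with h | ⟨d, _, hd⟩
  · exact h ▸ hv
  · exact (S.arcs_subset _ hd).2

theorem handover_le {w c : α} (h : (w, c) ∈ S.A) :
    S.handover w ≤ ((↑I.P : Set α) ∩ S.desc c).ncard :=
  Nat.sInf_le ⟨c, h, rfl⟩

theorem exists_handover_eq {w : α} (h : S.outDeg w = 2) :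
    ∃ c, (w, c) ∈ S.A ∧ S.handover w = ((↑I.P : Set α) ∩ S.desc c).ncard := by
  have hne : {x | (w, x) ∈ S.A}.Nonempty :=
    Set.nonempty_of_ncard_ne_zero (by change S.outDeg w ≠ 0; omega)
  obtain ⟨c, hc⟩ := hne
  exact Nat.sInf_mem (s := {k : ℕ | ∃ x, (w, x) ∈ S.A ∧ k = ((↑I.P : Set α) ∩ S.desc x).ncard})
    ⟨_, c, hc, rfl⟩

/-- An item strictly below another item is delayed by at least one more delivery time. -/
theorem delayTo_add_le {p q : α} (hq : q ∈ I.P) (hpq : S.reach p q) (hqp : ¬ S.reach q p) :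
    S.delayTo p + I.δ ≤ S.delayTo q := by
  have hsub : S.pathSet p ⊆ S.pathSet q := fun u hu => ⟨hu.1, hu.2.1, hu.2.2.trans hpq⟩
  have hqW : q ∈ S.W := S.items_subset hq
  have harcs : ∑ᶠ a ∈ S.pathArcs p, dist (S.μ a.1) (S.μ a.2)
      ≤ ∑ᶠ a ∈ S.pathArcs q, dist (S.μ a.1) (S.μ a.2) :=
    finsum_mem_le_finsum_mem_of_injOn (S.finite_pathArcs q) id
      (fun a ha => ⟨ha.1, hsub ha.2.1, hsub ha.2.2⟩) (Set.injOn_id _) (fun _ _ => le_rfl)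
      (fun _ _ => dist_nonneg)
  have hhand : ∑ᶠ w ∈ {u ∈ S.pathSet p | S.outDeg u = 2}, (S.handover w : ℝ)
      ≤ ∑ᶠ w ∈ {u ∈ S.pathSet q | S.outDeg u = 2}, (S.handover w : ℝ) :=
    finsum_mem_le_finsum_mem_of_injOn ((S.finite_pathSet q).subset fun _ h => h.1) id
      (fun a ha => ⟨hsub ha.1, ha.2⟩) (Set.injOn_id _) (fun _ _ => le_rfl)
      (fun _ _ => Nat.cast_nonneg _)
  have hitems : ((↑I.P : Set α) ∩ S.pathSet p).ncard + 1
      ≤ ((↑I.P : Set α) ∩ S.pathSet q).ncard := by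
    refine Set.ncard_lt_ncard ?_ (I.P.finite_toSet.inter_of_left _)
    refine (Set.ssubset_iff_of_subset (Set.inter_subset_inter_right _ hsub)).2
      ⟨q, ⟨hq, hqW, S.reachable q hqW, .refl⟩, fun h => hqp h.2.2.2⟩
  have hitems' : (((↑I.P : Set α) ∩ S.pathSet p).ncard : ℝ) + 1
      ≤ ((↑I.P : Set α) ∩ S.pathSet q).ncard := by exact_mod_cast hitems
  have := mul_le_mul_of_nonneg_left hitems' (zero_le_one.trans I.one_le_δ)
  unfold delayTo
  linarith

/-- The hypotheses under which the vertex `y` can be leafified. -/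
structure Leafifiable (x y z y' : α) : Prop where
  fresh : y' ∉ S.W
  outDeg_eq : S.outDeg y = 1
  arc_in : (x, y) ∈ S.A
  arc_out : (y, z) ∈ S.A

/-- The arc set obtained from `S.A` by turning `y` into a leaf hanging off the new vertex `y'`. -/
def leafArcs (x y z y' : α) : Set (α × α) :=
  (S.A \ {(x, y), (y, z)}) ∪ {(x, y'), (y', y), (y', z)}

def leafReach (x y z y' : α) : α → α → Prop :=
  Relation.ReflTransGen fun a b => (a, b) ∈ S.leafArcs x y z y'

variable {S} {x y z y' : α}

namespace Leafifiable

theorem mem_left (h : S.Leafifiable x y z y') : x ∈ S.W := (S.arcs_subset _ h.arc_in).1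

theorem mem_mid (h : S.Leafifiable x y z y') : y ∈ S.W := (S.arcs_subset _ h.arc_in).2

theorem mem_right (h : S.Leafifiable x y z y') : z ∈ S.W := (S.arcs_subset _ h.arc_out).2

theorem ne_fresh (h : S.Leafifiable x y z y') {v : α} (hv : v ∈ S.W) : v ≠ y' :=
  fun e => h.fresh (e ▸ hv)

theorem left_ne_mid (h : S.Leafifiable x y z y') : x ≠ y := by
  rintro rfl
  exact S.not_reach_of_arc h.arc_in .refl

theorem right_ne_mid (h : S.Leafifiable x y z y') : z ≠ y := by
  rintro rfl
  exact S.not_reach_of_arc h.arc_out .refl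

theorem ne_root (h : S.Leafifiable x y z y') : y ≠ I.r := by
  rintro rfl
  exact S.no_arc_into_root x h.arc_in

theorem fresh_not_item (h : S.Leafifiable x y z y') : y' ∉ I.P :=
  fun hy => h.fresh (S.items_subset hy)

theorem eq_right_of_arc (h : S.Leafifiable x y z y') {c : α} (hc : (y, c) ∈ S.A) : c = z := by
  obtain ⟨a, ha⟩ := Set.ncard_eq_one.1 h.outDeg_eq
  have h₁ : c ∈ ({a} : Set α) := ha ▸ hc
  have h₂ : z ∈ ({a} : Set α) := ha ▸ h.arc_out
  exact h₁.trans h₂.symm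

theorem mem_leafArcs_fresh_left (h : S.Leafifiable x y z y') {c : α} :
    (y', c) ∈ S.leafArcs x y z y' ↔ c = y ∨ c = z := by
  have h₁ : (y', c) ∉ S.A := fun hc => h.fresh (S.arcs_subset _ hc).1
  have h₂ := h.ne_fresh h.mem_left
  simp only [leafArcs, Set.mem_union, Set.mem_sdiff, Set.mem_insert_iff, Set.mem_singleton_iff,
    Prod.mk.injEq]
  grind

theorem mem_leafArcs_fresh_right (h : S.Leafifiable x y z y') {u : α} :
    (u, y') ∈ S.leafArcs x y z y' ↔ u = x := by
  have h₁ : (u, y') ∉ S.A := fun hc => h.fresh (S.arcs_subset _ hc).2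
  have h₂ := h.ne_fresh h.mem_mid
  have h₃ := h.ne_fresh h.mem_right
  simp only [leafArcs, Set.mem_union, Set.mem_sdiff, Set.mem_insert_iff, Set.mem_singleton_iff,
    Prod.mk.injEq]
  grind

theorem not_mem_leafArcs_mid (h : S.Leafifiable x y z y') {c : α} :
    (y, c) ∉ S.leafArcs x y z y' := by
  have h₁ : (y, c) ∈ S.A → c = z := h.eq_right_of_arc
  have h₂ := h.ne_fresh h.mem_mid
  have h₃ := h.left_ne_mid
  simp only [leafArcs, Set.mem_union, Set.mem_sdiff, Set.mem_insert_iff, Set.mem_singleton_iff,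
    Prod.mk.injEq]
  grind

theorem mem_leafArcs_mid (h : S.Leafifiable x y z y') {u : α} :
    (u, y) ∈ S.leafArcs x y z y' ↔ u = y' := by
  have h₁ : (u, y) ∈ S.A → u = x := fun hu => S.arc_tail_unique hu h.arc_in
  have h₂ := h.ne_fresh h.mem_mid
  have h₃ := h.right_ne_mid
  simp only [leafArcs, Set.mem_union, Set.mem_sdiff, Set.mem_insert_iff, Set.mem_singleton_iff,
    Prod.mk.injEq]
  grind

theorem mem_leafArcs_of_ne {u c : α} (hu : u ≠ y) (hu' : u ≠ y')
    (hc : c ≠ y) (hc' : c ≠ y') : (u, c) ∈ S.leafArcs x y z y' ↔ (u, c) ∈ S.A := by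
  simp only [leafArcs, Set.mem_union, Set.mem_sdiff, Set.mem_insert_iff, Set.mem_singleton_iff,
    Prod.mk.injEq]
  grind

theorem mem_leafArcs_right (h : S.Leafifiable x y z y') {u : α} :
    (u, z) ∈ S.leafArcs x y z y' ↔ u = y' := by
  have h₁ : (u, z) ∈ S.A → u = y := fun hu => S.arc_tail_unique hu h.arc_out
  have h₂ := h.ne_fresh h.mem_right
  have h₃ := h.right_ne_mid
  simp only [leafArcs, Set.mem_union, Set.mem_sdiff, Set.mem_insert_iff, Set.mem_singleton_iff,
    Prod.mk.injEq]
  grind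

open Classical in
/-- Children in the leafified arc set are the old children with `y` replaced by `y'`. -/
theorem children_eq (h : S.Leafifiable x y z y') {v : α} (hv : v ≠ y) (hv' : v ≠ y') :
    {c | (v, c) ∈ S.leafArcs x y z y'} = Equiv.swap y y' '' {c | (v, c) ∈ S.A} := by
  ext c
  rw [Equiv.image_eq_preimage_symm, Equiv.symm_swap]
  change _ ↔ (v, Equiv.swap y y' c) ∈ S.A
  rw [Set.mem_ofPred_eq]
  by_cases hc : c = y
  · rw [hc, Equiv.swap_apply_left, h.mem_leafArcs_mid]
    exact iff_of_false hv' fun e => h.fresh (S.arcs_subset _ e).2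
  by_cases hc' : c = y'
  · rw [hc', Equiv.swap_apply_right, h.mem_leafArcs_fresh_right]
    exact ⟨fun e => e ▸ h.arc_in, fun e => S.arc_tail_unique e h.arc_in⟩
  · rw [Equiv.swap_apply_of_ne_of_ne hc hc', mem_leafArcs_of_ne hv hv' hc hc']

theorem ncard_children_eq (h : S.Leafifiable x y z y') {v : α} (hv : v ≠ y) (hv' : v ≠ y') :
    {c | (v, c) ∈ S.leafArcs x y z y'}.ncard = S.outDeg v := by
  rw [h.children_eq hv hv', Set.ncard_image_of_injective _ (Equiv.injective _)]
  rfl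

theorem children_mid (h : S.Leafifiable x y z y') :
    {c | (y, c) ∈ S.leafArcs x y z y'} = ∅ :=
  Set.eq_empty_of_forall_notMem fun _ => h.not_mem_leafArcs_mid

theorem leafReach_step (h : S.Leafifiable x y z y') {s a b : α}
    (hsa : S.leafReach x y z y' s a) (hsy : a = y → S.leafReach x y z y' s y')
    (hab : (a, b) ∈ S.A) :
    S.leafReach x y z y' s b ∧ (b = y → S.leafReach x y z y' s y') := by
  have ha := h.ne_fresh (S.arcs_subset _ hab).1
  have hb := h.ne_fresh (S.arcs_subset _ hab).2
  by_cases hby : b = y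
  · subst hby
    obtain rfl := S.arc_tail_unique hab h.arc_in
    have h₁ := hsa.tail (h.mem_leafArcs_fresh_right.2 rfl)
    exact ⟨h₁.tail (h.mem_leafArcs_mid.2 rfl), fun _ => h₁⟩
  refine ⟨?_, fun e => absurd e hby⟩
  by_cases hay : a = y
  · subst hay
    obtain rfl := h.eq_right_of_arc hab
    exact (hsy rfl).tail (h.mem_leafArcs_fresh_left.2 (.inr rfl))
  · exact hsa.tail ((mem_leafArcs_of_ne hay ha hby hb).2 hab)

theorem leafReach_of_reach (h : S.Leafifiable x y z y') {s a b : α}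
    (hsa : S.leafReach x y z y' s a) (hsy : a = y → S.leafReach x y z y' s y')
    (hab : S.reach a b) :
    S.leafReach x y z y' s b ∧ (b = y → S.leafReach x y z y' s y') := by
  induction hab with
  | refl => exact ⟨hsa, hsy⟩
  | tail _ hbc ih => exact h.leafReach_step ih.1 ih.2 hbc

open Classical in
theorem reach_of_leafReach (h : S.Leafifiable x y z y') {a b : α}
    (hab : S.leafReach x y z y' a b) :
    S.reach (if a = y' then y else a) (if b = y' then y else b) := by
  induction hab with
  | refl => exact .refl
  | @tail b c _ hbc ih =>
    refine ih.trans ?_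
    have hy := h.ne_fresh h.mem_mid
    have hz := h.ne_fresh h.mem_right
    have hx := h.ne_fresh h.mem_left
    rcases hbc with ⟨hbc, -⟩ | hbc | hbc | hbc
    · rw [if_neg (h.ne_fresh (S.arcs_subset _ hbc).1), if_neg (h.ne_fresh (S.arcs_subset _ hbc).2)]
      exact .single hbc
    · obtain ⟨rfl, rfl⟩ := Prod.mk.inj hbc
      rw [if_neg hx, if_pos rfl]
      exact .single h.arc_in
    · obtain ⟨rfl, rfl⟩ := Prod.mk.inj hbc
      rw [if_pos rfl, if_neg hy]
    · obtain ⟨rfl, rfl⟩ := Prod.mk.inj hbc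
      rw [if_pos rfl, if_neg hz]
      exact .single h.arc_out

theorem reach_of_leafReach_of_mem (h : S.Leafifiable x y z y') {a b : α} (ha : a ∈ S.W)
    (hb : b ∈ S.W) (hab : S.leafReach x y z y' a b) : S.reach a b := by
  classical
  have := h.reach_of_leafReach hab
  rwa [if_neg (h.ne_fresh ha), if_neg (h.ne_fresh hb)] at this

theorem reach_of_leafReach_fresh_left (h : S.Leafifiable x y z y') {b : α}
    (hb : b ∈ S.W) (hab : S.leafReach x y z y' y' b) : S.reach y b := by
  classical
  have := h.reach_of_leafReach hab
  rwa [if_pos rfl, if_neg (h.ne_fresh hb)] at this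

theorem eq_of_leafReach_mid (h : S.Leafifiable x y z y') {b : α}
    (hb : S.leafReach x y z y' y b) : b = y := by
  rcases Relation.ReflTransGen.cases_head hb with e | ⟨c, hc, -⟩
  · exact e.symm
  · exact absurd hc h.not_mem_leafArcs_mid

theorem leafReach_root (h : S.Leafifiable x y z y') {v : α} (hv : v ∈ insert y' S.W) :
    S.leafReach x y z y' I.r v := by
  have key := fun {b} => h.leafReach_of_reach (s := I.r) (a := I.r) (b := b) .refl
    (fun e => absurd e.symm h.ne_root)
  rcases hv with rfl | hv
  · exact (key (S.reachable y h.mem_mid)).2 rfl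
  · exact (key (S.reachable v hv)).1

open Classical in
/-- The schedule obtained by turning `y` into a leaf hanging off the new vertex `y'`. -/
noncomputable def leafify (h : S.Leafifiable x y z y') : Schedule I where
  W := insert y' S.W
  A := S.leafArcs x y z y'
  μ := Function.update S.μ y' (S.μ y)
  finite_W := S.finite_W.insert _
  root_mem := .inr S.root_mem
  items_subset := fun _ hp => .inr (S.items_subset hp)
  arcs_subset := by
    rintro a (⟨ha, -⟩ | rfl | rfl | rfl)
    · exact ⟨.inr (S.arcs_subset a ha).1, .inr (S.arcs_subset a ha).2⟩
    · exact ⟨.inr h.mem_left, .inl rfl⟩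
    · exact ⟨.inl rfl, .inr h.mem_mid⟩
    · exact ⟨.inl rfl, .inr h.mem_right⟩
  no_arc_into_root := by
    have hr := h.ne_fresh S.root_mem
    have hz : z ≠ I.r := fun e => S.no_arc_into_root y (e ▸ h.arc_out)
    rintro u (⟨hu, -⟩ | hu | hu | hu)
    · exact S.no_arc_into_root u hu
    · exact hr (Prod.mk.inj hu).2
    · exact h.ne_root (Prod.mk.inj hu).2.symm
    · exact hz (Prod.mk.inj hu).2.symm
  unique_in_arc := by
    rintro v hv hvr
    by_cases hvy : v = y
    · exact ⟨y', hvy ▸ h.mem_leafArcs_mid.2 rfl, fun u hu => h.mem_leafArcs_mid.1 (hvy ▸ hu)⟩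
    by_cases hvz : v = z
    · exact ⟨y', hvz ▸ h.mem_leafArcs_right.2 rfl, fun u hu => h.mem_leafArcs_right.1 (hvz ▸ hu)⟩
    rcases hv with rfl | hv
    · exact ⟨x, h.mem_leafArcs_fresh_right.2 rfl, fun u hu => h.mem_leafArcs_fresh_right.1 hu⟩
    · obtain ⟨u, hu, huniq⟩ := S.unique_in_arc v hv hvr
      have hvy' := h.ne_fresh hv
      have key : ∀ w, (w, v) ∈ S.leafArcs x y z y' ↔ (w, v) ∈ S.A := by
        intro w
        simp only [leafArcs, Set.mem_union, Set.mem_sdiff, Set.mem_insert_iff,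
          Set.mem_singleton_iff, Prod.mk.injEq]
        grind
      exact ⟨u, (key u).2 hu, fun w hw => huniq w ((key w).1 hw)⟩
  reachable := fun v hv => h.leafReach_root hv
  outdeg_le_two := by
    rintro v hv
    by_cases hvy : v = y
    · simp [hvy, h.children_mid]
    by_cases hvy' : v = y'
    · have : {c | (v, c) ∈ S.leafArcs x y z y'} = {y, z} := by
        ext c
        simp [hvy', h.mem_leafArcs_fresh_left]
      rw [this]
      exact Set.ncard_insert_le _ _ |>.trans (by simp)
    · rw [h.ncard_children_eq hvy hvy']
      exact S.outdeg_le_two v (hv.resolve_left hvy')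
  items_outdeg_le_one := by
    rintro p hp
    by_cases hpy : p = y
    · simp [hpy, h.children_mid]
    · rw [h.ncard_children_eq hpy (h.ne_fresh (S.items_subset hp))]
      exact S.items_outdeg_le_one p hp
  μ_placement := by
    intro v hv
    have hvW : v ∈ S.W := hv.elim (fun e => e ▸ S.root_mem) fun e => S.items_subset e
    rw [Function.update_of_ne (h.ne_fresh hvW)]
    exact S.μ_placement v hv

/-- Old vertices other than `y` keep their items below them. -/
theorem items_desc_leafify (h : S.Leafifiable x y z y') {c : α} (hc : c ∈ S.W) (hcy : c ≠ y) :
    (↑I.P : Set α) ∩ h.leafify.desc c = ↑I.P ∩ S.desc c := by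
  ext p
  refine and_congr_right fun hp => ?_
  have hpW := S.items_subset hp
  exact ⟨fun hd => ⟨hpW, h.reach_of_leafReach_of_mem hc hpW hd.2⟩,
    fun hd => ⟨.inr hpW, (h.leafReach_of_reach .refl (fun e => absurd e hcy) hd.2).1⟩⟩

theorem items_desc_leafify_fresh (h : S.Leafifiable x y z y') :
    (↑I.P : Set α) ∩ h.leafify.desc y' = ↑I.P ∩ S.desc y := by
  ext p
  refine and_congr_right fun hp => ?_
  have hpW := S.items_subset hp
  exact ⟨fun hd => ⟨hpW, h.reach_of_leafReach_fresh_left hpW hd.2⟩,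
    fun hd => ⟨.inr hpW, (h.leafReach_of_reach
      (.single (h.mem_leafArcs_mid.2 rfl)) (fun _ => .refl) hd.2).1⟩⟩

theorem handover_leafify_le (h : S.Leafifiable x y z y') {u : α} (hu : u ≠ y) (hu' : u ≠ y')
    (hdeg : S.outDeg u = 2) : h.leafify.handover u ≤ S.handover u := by
  obtain ⟨c, hc, hk⟩ := S.exists_handover_eq hdeg
  have hcW := (S.arcs_subset _ hc).2
  rw [hk]
  by_cases hcy : c = y
  · subst hcy
    obtain rfl := S.arc_tail_unique hc h.arc_in
    rw [← h.items_desc_leafify_fresh]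
    exact h.leafify.handover_le (h.mem_leafArcs_fresh_right.2 rfl)
  · rw [← h.items_desc_leafify hcW hcy]
    exact h.leafify.handover_le ((mem_leafArcs_of_ne hu hu' hcy (h.ne_fresh hcW)).2 hc)

theorem handover_leafify_fresh_le (h : S.Leafifiable x y z y') :
    h.leafify.handover y' ≤ ((↑I.P : Set α) ∩ {y}).ncard := by
  refine (h.leafify.handover_le (h.mem_leafArcs_fresh_left.2 (.inl rfl))).trans ?_
  exact Set.ncard_le_ncard (Set.inter_subset_inter_right _ fun u hu => h.eq_of_leafReach_mid hu.2)
    (I.P.finite_toSet.inter_of_left _)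

theorem handover_leafify_fresh_eq_zero (h : S.Leafifiable x y z y')
    (hz : (↑I.P : Set α) ∩ S.desc z = ∅) : h.leafify.handover y' = 0 := by
  refine Nat.le_zero.1 ((h.leafify.handover_le (h.mem_leafArcs_fresh_left.2 (.inr rfl))).trans ?_)
  rw [h.items_desc_leafify h.mem_right h.right_ne_mid, hz, Set.ncard_empty]

theorem travel_leafify_le (h : S.Leafifiable x y z y') {p : α} (hp : p ∈ S.W) :
    ∑ᶠ a ∈ h.leafify.pathArcs p, dist (h.leafify.μ a.1) (h.leafify.μ a.2)
      ≤ ∑ᶠ a ∈ S.pathArcs p, dist (S.μ a.1) (S.μ a.2) := by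
  classical
  set π : α → α := fun a => if a = y' then y else a with hπ
  have hμ : ∀ a, h.leafify.μ a = S.μ (π a) := by
    intro a
    change Function.update S.μ y' (S.μ y) a = S.μ (π a)
    by_cases ha : a = y' <;> simp [hπ, ha]
  have hπ_of_mem : ∀ {a}, a ∈ S.W → π a = a := fun ha => if_neg (h.ne_fresh ha)
  have hπ_fresh : π y' = y := if_pos rfl
  have hπ_inj : ∀ {a b}, a ≠ y → b ≠ y → π a = π b → a = b := by
    intro a b ha hb hab
    simp only [hπ] at hab
    grind
  have hpath : ∀ {u}, u ∈ h.leafify.pathSet p → π u ∈ S.pathSet p := by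
    rintro u ⟨hu, hru, hup⟩
    have hW : π u ∈ S.W := by
      rcases hu with rfl | hu
      · exact hπ_fresh ▸ h.mem_mid
      · exact (hπ_of_mem hu).symm ▸ hu
    refine ⟨hW, S.reachable _ hW, ?_⟩
    simpa only [if_neg (h.ne_fresh hp)] using h.reach_of_leafReach hup
  have hloop : ∀ {a : α × α}, a ∈ h.leafify.pathArcs p ∩
      Function.support (fun a => dist (h.leafify.μ a.1) (h.leafify.μ a.2)) →
      a.1 ≠ y ∧ a.2 ≠ y := by
    rintro ⟨u, v⟩ ⟨⟨huv, -⟩, hne⟩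
    refine ⟨?_, ?_⟩
    · rintro rfl
      exact h.not_mem_leafArcs_mid huv
    · rintro rfl
      obtain rfl := h.mem_leafArcs_mid.1 huv
      simp [hμ, hπ_fresh, hπ_of_mem h.mem_mid] at hne
  rw [← finsum_mem_inter_support]
  refine finsum_mem_le_finsum_mem_of_injOn (S.finite_pathArcs p) (Prod.map π π) ?_ ?_ ?_
    (fun _ _ => dist_nonneg)
  · rintro ⟨u, v⟩ ha
    obtain ⟨hu, hv⟩ := hloop ha
    obtain ⟨⟨huv, hup, hvp⟩, -⟩ := ha
    refine ⟨?_, hpath hup, hpath hvp⟩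
    rcases huv with ⟨huv, -⟩ | huv | huv | huv
    · simpa [hπ_of_mem (S.arcs_subset _ huv).1, hπ_of_mem (S.arcs_subset _ huv).2] using huv
    · obtain ⟨rfl, rfl⟩ := Prod.mk.inj huv
      simpa [hπ_of_mem h.mem_left, hπ_fresh] using h.arc_in
    · exact absurd (Prod.mk.inj huv).2 hv
    · obtain ⟨rfl, rfl⟩ := Prod.mk.inj huv
      simpa [hπ_of_mem h.mem_right, hπ_fresh] using h.arc_out
  · rintro ⟨u, v⟩ ha ⟨u', v'⟩ hb hab
    obtain ⟨h₁, h₂⟩ := Prod.mk.inj hab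
    exact Prod.ext (hπ_inj (hloop ha).1 (hloop hb).1 h₁) (hπ_inj (hloop ha).2 (hloop hb).2 h₂)
  · intro a _
    simp [hμ]

theorem pathSet_leafify_subset (h : S.Leafifiable x y z y') {p : α} (hp : p ∈ S.W) :
    h.leafify.pathSet p ⊆ insert y' (S.pathSet p) := by
  rintro u ⟨rfl | hu, hru, hup⟩
  · exact .inl rfl
  · exact .inr ⟨hu, S.reachable u hu, h.reach_of_leafReach_of_mem hu hp hup⟩

theorem handovers_leafify_le (h : S.Leafifiable x y z y') {p : α} (hp : p ∈ S.W) :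
    ∑ᶠ w ∈ {u ∈ h.leafify.pathSet p | h.leafify.outDeg u = 2}, (h.leafify.handover w : ℝ)
      ≤ (∑ᶠ w ∈ {u ∈ S.pathSet p | S.outDeg u = 2}, (S.handover w : ℝ))
        + h.leafify.handover y' := by
  classical
  set t := {u ∈ S.pathSet p | S.outDeg u = 2}
  have ht : t.Finite := (S.finite_pathSet p).subset fun _ hu => hu.1
  have hyt : y' ∉ t := fun hy => h.fresh hy.1.1
  set f : α → ℝ := Function.update (fun w => (S.handover w : ℝ)) y' (h.leafify.handover y')
  have hf : ∀ w, w ≠ y' → f w = S.handover w := fun w hw => Function.update_of_ne hw _ _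
  have hfy : f y' = h.leafify.handover y' := Function.update_self _ _ _
  have hsum : ∑ᶠ w ∈ insert y' t, f w
      = (∑ᶠ w ∈ t, (S.handover w : ℝ)) + h.leafify.handover y' := by
    rw [finsum_mem_insert _ hyt ht, hfy, add_comm]
    congr 1
    exact finsum_mem_congr rfl fun w hw => hf w fun e => hyt (e ▸ hw)
  have hmem : ∀ {u}, u ∈ {u ∈ h.leafify.pathSet p | h.leafify.outDeg u = 2} → u ≠ y' →
      u ≠ y ∧ u ∈ t := by
    rintro u ⟨hu, hdeg⟩ huy'
    have huy : u ≠ y := by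
      rintro rfl
      have h₀ : h.leafify.outDeg u = 0 :=
        (congrArg Set.ncard h.children_mid).trans (Set.ncard_empty α)
      omega
    exact ⟨huy, (h.pathSet_leafify_subset hp hu).resolve_left huy',
      (h.ncard_children_eq huy huy').symm.trans hdeg⟩
  rw [← hsum]
  refine finsum_mem_le_finsum_mem_of_injOn (ht.insert _) id ?_ (Set.injOn_id _) ?_ ?_
  · intro u hu
    by_cases huy' : u = y'
    · exact .inl huy'
    · exact .inr (hmem hu huy').2
  · intro u hu
    by_cases huy' : u = y'
    · rw [huy', id, hfy]
    · obtain ⟨huy, hut⟩ := hmem hu huy'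
      rw [id, hf u huy']
      exact_mod_cast h.handover_leafify_le huy huy' hut.2
  · intro u _
    by_cases huy' : u = y'
    · rw [huy', hfy]
      positivity
    · rw [hf u huy']
      positivity

theorem items_leafify_subset (h : S.Leafifiable x y z y') {p : α} (hp : p ∈ S.W) :
    (↑I.P : Set α) ∩ h.leafify.pathSet p ⊆ ↑I.P ∩ S.pathSet p :=
  fun _ hu => ⟨hu.1, (h.pathSet_leafify_subset hp hu.2).resolve_left
    fun e => h.fresh_not_item (e ▸ hu.1)⟩

theorem items_leafify_add_le (h : S.Leafifiable x y z y') {p : α} (hp : p ∈ S.W) (hpy : p ≠ y)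
    (hyp : S.reach y p) :
    ((↑I.P : Set α) ∩ h.leafify.pathSet p).ncard + ((↑I.P : Set α) ∩ {y}).ncard
      ≤ ((↑I.P : Set α) ∩ S.pathSet p).ncard := by
  have hfin : ∀ s : Set α, ((↑I.P : Set α) ∩ s).Finite := I.P.finite_toSet.inter_of_left
  rw [← Set.ncard_union_eq ?_ (hfin _) (hfin _)]
  · refine Set.ncard_le_ncard (Set.union_subset (h.items_leafify_subset hp) ?_) (hfin _)
    rintro _ ⟨hy, rfl⟩
    exact ⟨hy, h.mem_mid, S.reachable _ h.mem_mid, hyp⟩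
  · rw [Set.disjoint_left]
    rintro _ ⟨-, hy⟩ ⟨-, rfl⟩
    exact hpy (h.eq_of_leafReach_mid hy.2.2)

theorem ncard_items_inter_mid_le (I : VRInstance α M) (y : α) :
    ((↑I.P : Set α) ∩ {y}).ncard ≤ 1 :=
  (Set.ncard_le_ncard Set.inter_subset_right).trans (Set.ncard_singleton y).le

theorem handover_leafify_fresh_le_one (h : S.Leafifiable x y z y') :
    (h.leafify.handover y' : ℝ) ≤ 1 := by
  exact_mod_cast h.handover_leafify_fresh_le.trans (ncard_items_inter_mid_le I y)

theorem delayTo_leafify_le_add (h : S.Leafifiable x y z y') {p : α} (hp : p ∈ S.W) :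
    h.leafify.delayTo p ≤ S.delayTo p + h.leafify.handover y' := by
  have hitems : (((↑I.P : Set α) ∩ h.leafify.pathSet p).ncard : ℝ)
      ≤ ((↑I.P : Set α) ∩ S.pathSet p).ncard := by
    exact_mod_cast Set.ncard_le_ncard (h.items_leafify_subset hp)
      (I.P.finite_toSet.inter_of_left _)
  have := mul_le_mul_of_nonneg_left hitems (zero_le_one.trans I.one_le_δ)
  have := h.travel_leafify_le hp
  have := h.handovers_leafify_le hp
  unfold delayTo
  linarith

/-- If `y` lies on the path to `p ≠ y`, the delivery time saved at `y` pays for the handover. -/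
theorem delayTo_leafify_le_of_reach (h : S.Leafifiable x y z y') {p : α} (hp : p ∈ S.W)
    (hpy : p ≠ y) (hyp : S.reach y p) : h.leafify.delayTo p ≤ S.delayTo p := by
  have hitems : (((↑I.P : Set α) ∩ h.leafify.pathSet p).ncard : ℝ)
      + ((↑I.P : Set α) ∩ {y}).ncard ≤ ((↑I.P : Set α) ∩ S.pathSet p).ncard := by
    exact_mod_cast h.items_leafify_add_le hp hpy hyp
  have hfresh : (h.leafify.handover y' : ℝ) ≤ ((↑I.P : Set α) ∩ {y}).ncard := by
    exact_mod_cast h.handover_leafify_fresh_le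
  have := mul_le_mul_of_nonneg_left hitems (zero_le_one.trans I.one_le_δ)
  have := mul_le_mul_of_nonneg_right I.one_le_δ
    (Nat.cast_nonneg (α := ℝ) ((↑I.P : Set α) ∩ {y}).ncard)
  have := h.travel_leafify_le hp
  have := h.handovers_leafify_le hp
  unfold delayTo
  linarith

theorem delayTo_leafify_le_of_not_reach (h : S.Leafifiable x y z y') {p : α} (hp : p ∈ S.W)
    (hyp : ¬ S.reach y p) : h.leafify.delayTo p ≤ S.delayTo p := by
  have hpath : ∀ {u}, u ∈ h.leafify.pathSet p → u ≠ y ∧ u ≠ y' ∧ u ∈ S.pathSet p := by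
    intro u hu
    have huy' : u ≠ y' := by
      rintro rfl
      exact hyp (h.reach_of_leafReach_fresh_left hp hu.2.2)
    have hup := (h.pathSet_leafify_subset hp hu).resolve_left huy'
    exact ⟨fun e => hyp (e ▸ hup.2.2), huy', hup⟩
  have hhand : ∑ᶠ w ∈ {u ∈ h.leafify.pathSet p | h.leafify.outDeg u = 2},
      (h.leafify.handover w : ℝ)
      ≤ ∑ᶠ w ∈ {u ∈ S.pathSet p | S.outDeg u = 2}, (S.handover w : ℝ) := by
    have hdeg : ∀ {u}, u ∈ h.leafify.pathSet p → h.leafify.outDeg u = 2 → S.outDeg u = 2 :=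
      fun hu hd => (h.ncard_children_eq (hpath hu).1 (hpath hu).2.1).symm.trans hd
    refine finsum_mem_le_finsum_mem_of_injOn ((S.finite_pathSet p).subset fun _ hu => hu.1) id
      (fun u hu => ⟨(hpath hu.1).2.2, hdeg hu.1 hu.2⟩) (Set.injOn_id _) (fun u hu => ?_)
      (fun _ _ => Nat.cast_nonneg _)
    exact_mod_cast h.handover_leafify_le (hpath hu.1).1 (hpath hu.1).2.1 (hdeg hu.1 hu.2)
  have hitems : (((↑I.P : Set α) ∩ h.leafify.pathSet p).ncard : ℝ)
      ≤ ((↑I.P : Set α) ∩ S.pathSet p).ncard := by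
    exact_mod_cast Set.ncard_le_ncard (h.items_leafify_subset hp)
      (I.P.finite_toSet.inter_of_left _)
  have := mul_le_mul_of_nonneg_left hitems (zero_le_one.trans I.one_le_δ)
  have := h.travel_leafify_le hp
  unfold delayTo
  linarith

theorem delay_leafify_le (h : S.Leafifiable x y z y') : h.leafify.delay ≤ S.delay := by
  have hle : ∀ {p}, p ∈ I.P → S.delayTo p ≤ S.delay := fun hp =>
    Finset.le_sup' (fun p => S.delayTo p) hp
  refine Finset.sup'_le _ _ fun p hp => ?_
  have hpW := S.items_subset hp
  by_cases hyp : S.reach y p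
  swap
  · exact (h.delayTo_leafify_le_of_not_reach hpW hyp).trans (hle hp)
  by_cases hpy : p = y
  swap
  · exact (h.delayTo_leafify_le_of_reach hpW hpy hyp).trans (hle hp)
  subst hpy
  rcases ((↑I.P : Set α) ∩ S.desc z).eq_empty_or_nonempty with hz | ⟨q, hq, -, hzq⟩
  · have := h.delayTo_leafify_le_add hpW
    rw [h.handover_leafify_fresh_eq_zero hz, Nat.cast_zero, add_zero] at this
    exact this.trans (hle hp)
  · have hqp : ¬ S.reach q p := fun e => S.not_reach_of_arc h.arc_out (hzq.trans e)
    have := S.delayTo_add_le hq (.head h.arc_out hzq) hqp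
    linarith [h.delayTo_leafify_le_add hpW, h.handover_leafify_fresh_le_one, I.one_le_δ, hle hq]

end Leafifiable

end Schedule


/-- **Leafication does not increase delay.**
Let `(W,A,μ)` be a schedule and `y ∈ W ∖ {r}` a vertex of out-degree 1 with
incident arcs `(x,y),(y,z) ∈ A`. Let `y' ∉ W` be a new vertex and define
`W' := W ∪ {y'}`, `A' := (A ∖ {(x,y),(y,z)}) ∪ {(x,y'),(y',y),(y',z)}`,
`μ' := μ` on `W` and `μ'(y') := μ(y)`. Then `(W',A',μ')` is a schedule and
`delay(W',A',μ') ≤ delay(W,A,μ)`. -/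
theorem leafication_delay [DecidableEq α] (I : VRInstance α M) (S : Schedule I)
    (x y z y' : α) (hyW : y ∈ S.W) (hyr : y ≠ I.r) (hydeg : S.outDeg y = 1)
    (hxy : (x, y) ∈ S.A) (hyz : (y, z) ∈ S.A) (hy' : y' ∉ S.W) :
    ∃ S' : Schedule I,
      S'.W = insert y' S.W ∧
      S'.A = (S.A \ {(x, y), (y, z)}) ∪ {(x, y'), (y', y), (y', z)} ∧
      S'.μ = Function.update S.μ y' (S.μ y) ∧
      S'.delay ≤ S.delay := by
  have h : S.Leafifiable x y z y' := ⟨hy', hydeg, hxy, hyz⟩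
  refine ⟨h.leafify, rfl, rfl, ?_, h.delay_leafify_le⟩
  rw [Schedule.Leafifiable.leafify]
  congr!
end

section
/- Tour splitting: Let (M,c) be a metric space, r ∈ M, and P ⊆ M a finite set of n ≥ 1 points. Let s ∈ P satisfy c(r,s) = max_{p∈P} c(r,p), let MST denote the minimum total length of a tree with vertex set {r} ∪ P (edges weighted by c), and let ε > 0 and 0 < Δ ≤ MST. Then there exists a set F of unordered pairs of distinct elements of P such that the graph (P,F) is a vertex-disjoint union of paths and: (a) the number of connected components of (P,F) is at most 1 + (n + 2·MST − c(r,s))/(εΔ); (b) every connected component has total edge length at most εΔ; (c) every connected component has at most 1 + εΔ vertices; (d) the total edge length Σ_{{u,v}∈F} c(u,v) is at most 2·MST − c(r,s). -/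
/-- The weight of an unordered pair of points of a metric space: their
distance. -/
noncomputable def pairDist {M : Type*} [MetricSpace M] {S : Set M} :
    Sym2 ↥S → ℝ :=
  Sym2.lift ⟨fun u v => dist (u : M) (v : M), fun u v => dist_comm _ _⟩

/-- The minimum total length of a tree with vertex set `S`, edges weighted by
the metric distance. -/
noncomputable def mstOn {M : Type*} [MetricSpace M] (S : Set M) : ℝ :=
  sInf {x : ℝ | ∃ T : SimpleGraph ↥S, T.IsTree ∧
    x = ∑ᶠ e ∈ T.edgeSet, pairDist e}

lemma pairDist_nonneg {M : Type*} [MetricSpace M] {S : Set M} (e : Sym2 ↥S) :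
    0 ≤ pairDist e := by
  induction e with
  | _ => exact dist_nonneg

lemma pairDist_mk {M : Type*} [MetricSpace M] {S : Set M} (u v : ↥S) :
    pairDist s(u, v) = dist (u : M) (v : M) := rfl

lemma finsum_pairDist_le_sum {M : Type*} [MetricSpace M] {S : Set M} {ι : Type*}
    (J : Finset ι) (g : ι → Sym2 ↥S) (F : Set (Sym2 ↥S)) (hF : ∀ e ∈ F, ∃ j ∈ J, g j = e) :
    (∑ᶠ e ∈ F, pairDist e) ≤ ∑ j ∈ J, pairDist (g j) := by
  classical
  have hsub : F ⊆ ↑(J.image g) := fun e he => by simpa using hF e he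
  have hfin : F.Finite := (J.image g).finite_toSet.subset hsub
  rw [finsum_mem_eq_finite_toFinset_sum _ hfin]
  calc ∑ e ∈ hfin.toFinset, pairDist e ≤ ∑ e ∈ J.image g, pairDist e :=
        Finset.sum_le_sum_of_subset_of_nonneg
          (fun e he => hsub (hfin.mem_toFinset.1 he)) fun e _ _ => pairDist_nonneg e
    _ ≤ ∑ j ∈ J, pairDist (g j) :=
        Finset.sum_image_le_of_nonneg fun e _ => pairDist_nonneg e

/-- The total distance between consecutive entries of a list. -/
noncomputable def pathLength {M : Type*} [MetricSpace M] : List M → ℝ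
  | [] => 0
  | [_] => 0
  | a :: b :: l => dist a b + pathLength (b :: l)

section PathLength

variable {M : Type*} [MetricSpace M]

lemma pathLength_nonneg : ∀ l : List M, 0 ≤ pathLength l
  | [] => le_rfl
  | [_] => le_rfl
  | _ :: b :: l => add_nonneg dist_nonneg (pathLength_nonneg (b :: l))

lemma pathLength_le_cons (a : M) (l : List M) : pathLength l ≤ pathLength (a :: l) := by
  cases l with
  | nil => exact le_rfl
  | cons b l => exact le_add_of_nonneg_left dist_nonneg

lemma pathLength_cons_le (a b : M) (l : List M) :
    pathLength (a :: l) ≤ dist a b + pathLength (b :: l) := by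
  cases l with
  | nil => simp [pathLength]
  | cons x l =>
    simp only [pathLength]
    linarith [dist_triangle a b x]

lemma pathLength_cons_le_of_sublist {l₁ l₂ : List M} (h : l₁.Sublist l₂) :
    ∀ a, pathLength (a :: l₁) ≤ pathLength (a :: l₂) := by
  induction h with
  | slnil => exact fun _ => le_rfl
  | cons b _ ih =>
    intro a
    exact (pathLength_cons_le a b _).trans (add_le_add le_rfl (ih b))
  | cons_cons b _ ih => exact fun a => add_le_add le_rfl (ih b)

lemma pathLength_le_of_sublist {l₁ l₂ : List M} (h : l₁.Sublist l₂) :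
    pathLength l₁ ≤ pathLength l₂ := by
  cases h with
  | slnil => exact le_rfl
  | cons b h => exact (pathLength_le_cons b _).trans (pathLength_cons_le_of_sublist h b)
  | cons_cons b h => exact pathLength_cons_le_of_sublist h b

lemma pathLength_append_cons (l₁ : List M) (a : M) (l₂ : List M) :
    pathLength (l₁ ++ a :: l₂) = pathLength (l₁ ++ [a]) + pathLength (a :: l₂) := by
  induction l₁ with
  | nil => simp [pathLength]
  | cons b l₁ ih =>
    cases l₁ with
    | nil => simp [pathLength]
    | cons c l₁ =>
      simp only [List.cons_append, pathLength] at ih ⊢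
      linarith

lemma pathLength_eq_sum (y : M) (l : List M) :
    pathLength l = ∑ j ∈ Finset.range (l.length - 1), dist (l.getD j y) (l.getD (j + 1) y) := by
  induction l with
  | nil => simp [pathLength]
  | cons a l ih =>
    cases l with
    | nil => simp [pathLength]
    | cons b l =>
      simp only [pathLength, ih]
      simp [Finset.sum_range_succ', add_comm]

end PathLength

/-- The list starts with `r` and ends with `s`. -/
def IsListFromTo {V : Type*} (l : List V) (r s : V) : Prop :=
  l.head? = some r ∧ l.getLast? = some s

/-- In a subtree grown one edge at a time, any two vertices are joined by a covering walk whose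
length is at most twice the weight minus the distance between its ends. -/
lemma exists_partial_covering_walk {M : Type*} [MetricSpace M] {S : Set M} [Finite ↥S]
    {T : SimpleGraph ↥S} (hT : T.Connected) (k : ℕ) (hk : k + 1 ≤ Nat.card ↥S) :
    ∃ (A : Finset ↥S) (E : Finset (Sym2 ↥S)), A.card = k + 1 ∧ (E : Set _) ⊆ T.edgeSet ∧
      (∀ e ∈ E, ∀ v ∈ e, v ∈ A) ∧
      ∀ r ∈ A, ∀ s ∈ A, ∃ l : List ↥S, IsListFromTo l r s ∧ (∀ a ∈ A, a ∈ l) ∧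
        pathLength l ≤ 2 * ∑ e ∈ E, pairDist e - dist r s := by
  classical
  induction k with
  | zero =>
    obtain ⟨v⟩ := hT.nonempty
    refine ⟨{v}, ∅, by simp, by simp, by simp, ?_⟩
    intro r hr s hs
    rw [Finset.mem_singleton] at hr hs
    exact ⟨[v], ⟨by simp [hr], by simp [hs]⟩, by simp, by simp [pathLength, hr, hs]⟩
  | succ k ih =>
    obtain ⟨A, E, hA, hE, hEA, hw⟩ := ih (by omega)
    obtain ⟨a, ha⟩ : A.Nonempty := Finset.card_pos.1 (by omega)
    obtain ⟨b, hb⟩ : ∃ b, b ∉ A := by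
      by_contra! h
      have : (A : Set ↥S) = Set.univ := Set.eq_univ_of_forall h
      rw [← Set.ncard_univ, ← this, Set.ncard_coe_finset] at hk
      omega
    obtain ⟨p⟩ := hT.preconnected a b
    obtain ⟨d, -, hu, hv⟩ := p.exists_boundary_dart (A : Set ↥S) ha hb
    have huv := d.adj
    generalize d.fst = u at *
    generalize d.snd = v at *
    simp only [Finset.mem_coe] at hu hv
    have hnew : s(u, v) ∉ E := fun h => hv (hEA _ h v (by simp))
    refine ⟨insert v A, insert s(u, v) E, by simp [hv, hA], ?_, ?_, ?_⟩
    · intro e he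
      rcases Finset.mem_insert.1 he with rfl | he
      · exact huv
      · exact hE he
    · intro e he x hx
      rcases Finset.mem_insert.1 he with rfl | he
      · rcases Sym2.mem_iff.1 hx with rfl | rfl <;> simp [hu]
      · exact Finset.mem_insert_of_mem (hEA e he x hx)
    · rw [Finset.sum_insert hnew, pairDist_mk, ← Subtype.dist_eq]
      have hd : (0 : ℝ) ≤ dist u v := dist_nonneg
      have hdc := dist_comm u v
      intro r hr s hs
      rcases Finset.mem_insert.1 hr with rfl | hrA <;> rcases Finset.mem_insert.1 hs with rfl | hsA
      · obtain ⟨l, ⟨h1, h2⟩, h3, h4⟩ := hw u hu u hu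
        obtain ⟨l', rfl⟩ := List.getLast?_eq_some_iff.1 h2
        refine ⟨s :: (l' ++ [u, s]), ⟨rfl,
          List.getLast?_eq_some_iff.2 ⟨s :: (l' ++ [u]), by simp⟩⟩, ?_, ?_⟩
        · intro x hx
          rcases Finset.mem_insert.1 hx with rfl | hx
          · simp
          · have := h3 x hx
            simp only [List.mem_append, List.mem_cons] at this ⊢
            tauto
        · have e1 := pathLength_append_cons l' u [s]
          have e2 : pathLength (s :: (l' ++ [u, s])) = dist s u + pathLength (l' ++ [u, s]) := by
            cases l' with
            | nil => rfl
            | cons x l' =>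
              have : x = u := by simpa using h1
              subst this
              rfl
          simp only [pathLength] at e1
          rw [dist_self] at h4 ⊢
          linarith
      · obtain ⟨l, ⟨h1, h2⟩, h3, h4⟩ := hw u hu s hsA
        obtain ⟨l', rfl⟩ := List.head?_eq_some_iff.1 h1
        refine ⟨r :: u :: l', ⟨rfl, by simpa using h2⟩, ?_, ?_⟩
        · intro x hx
          rcases Finset.mem_insert.1 hx with rfl | hx
          · simp
          · exact List.mem_cons_of_mem _ (h3 x hx)
        · simp only [pathLength]
          linarith [dist_triangle r u s]
      · obtain ⟨l, ⟨h1, h2⟩, h3, h4⟩ := hw r hrA u hu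
        obtain ⟨l', rfl⟩ := List.getLast?_eq_some_iff.1 h2
        refine ⟨l' ++ [u, s], ⟨by cases l' <;> simpa using h1, by simp⟩, ?_, ?_⟩
        · intro x hx
          rcases Finset.mem_insert.1 hx with rfl | hx
          · simp
          · have := h3 x hx
            simp only [List.mem_append, List.mem_cons] at this ⊢
            tauto
        · have e1 := pathLength_append_cons l' u [s]
          simp only [pathLength] at e1
          linarith [dist_triangle r u s]
      · obtain ⟨l, ⟨h1, h2⟩, h3, h4⟩ := hw r hrA s hsA
        obtain ⟨l₁, l₂, rfl⟩ := List.append_of_mem (h3 u hu)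
        refine ⟨l₁ ++ u :: v :: u :: l₂, ⟨by cases l₁ <;> simpa using h1, by simpa using h2⟩,
          ?_, ?_⟩
        · intro x hx
          rcases Finset.mem_insert.1 hx with rfl | hx
          · simp
          · have := h3 x hx
            simp only [List.mem_append, List.mem_cons] at this ⊢
            tauto
        · have e1 := pathLength_append_cons l₁ u l₂
          have e2 := pathLength_append_cons l₁ u (v :: u :: l₂)
          simp only [pathLength] at e2
          linarith

lemma exists_covering_walk {M : Type*} [MetricSpace M] {S : Set M} [Finite ↥S]
    {T : SimpleGraph ↥S} (hT : T.Connected) (r s : ↥S) :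
    ∃ l : List ↥S, (∀ a, a ∈ l) ∧
      pathLength l ≤ 2 * ∑ᶠ e ∈ T.edgeSet, pairDist e - dist r s := by
  have hpos : 0 < Nat.card ↥S := Nat.card_pos_iff.2 ⟨⟨r⟩, inferInstance⟩
  obtain ⟨A, E, hA, hE, -, hw⟩ :=
    exists_partial_covering_walk hT (Nat.card ↥S - 1) (by omega)
  have hall : ∀ a, a ∈ A := by
    have := (Set.eq_univ_iff_ncard (A : Set ↥S)).2 (by rw [Set.ncard_coe_finset]; omega)
    intro a
    rw [← Finset.mem_coe, this]
    trivial
  obtain ⟨l, -, hl, hlen⟩ := hw r (hall r) s (hall s)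
  refine ⟨l, fun a => hl a (hall a), hlen.trans ?_⟩
  have hfin : T.edgeSet.Finite := Set.toFinite _
  rw [finsum_mem_eq_finite_toFinset_sum _ hfin]
  have := Finset.sum_le_sum_of_subset_of_nonneg (f := fun e : Sym2 ↥S => pairDist e)
    (fun e he => hfin.mem_toFinset.2 (hE he)) fun e _ _ => pairDist_nonneg e
  linarith

lemma exists_tree_eq_mstOn {M : Type*} [MetricSpace M] {S : Set M} [Finite ↥S]
    (h : 0 < mstOn S) :
    ∃ T : SimpleGraph ↥S, T.IsTree ∧ mstOn S = ∑ᶠ e ∈ T.edgeSet, pairDist e := by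
  have hne : {x : ℝ | ∃ T : SimpleGraph ↥S, T.IsTree ∧
      x = ∑ᶠ e ∈ T.edgeSet, pairDist e}.Nonempty := by
    rw [Set.nonempty_iff_ne_empty]
    intro h0
    rw [mstOn, h0, Real.sInf_empty] at h
    exact lt_irrefl _ h
  refine hne.csInf_mem ?_
  refine (Set.finite_range fun T : SimpleGraph ↥S => ∑ᶠ e ∈ T.edgeSet, pairDist e).subset ?_
  rintro x ⟨T, -, rfl⟩
  exact ⟨T, rfl⟩

lemma pathLength_map_val {M : Type*} [MetricSpace M] {S : Set M} :
    ∀ l : List ↥S, pathLength (l.map Subtype.val) = pathLength l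
  | [] => rfl
  | [_] => rfl
  | a :: b :: l => by
    have := pathLength_map_val (b :: l)
    simp only [List.map_cons, pathLength] at this ⊢
    rw [this, Subtype.dist_eq]

/-- A minimum spanning tree of `{r} ∪ P` yields a Hamiltonian path on `P`. -/
lemma exists_hamiltonian_list {M : Type*} [MetricSpace M] (P : Finset M) (r s : M) (hsP : s ∈ P)
    (h : 0 < mstOn (insert r ↑P : Set M)) :
    ∃ l : List M, l.Nodup ∧ (∀ a, a ∈ l ↔ a ∈ P) ∧
      pathLength l ≤ 2 * mstOn (insert r ↑P : Set M) - dist r s := by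
  classical
  have : Finite ↥(insert r ↑P : Set M) := (P.finite_toSet.insert r).to_subtype
  obtain ⟨T, hT, hw⟩ := exists_tree_eq_mstOn h
  obtain ⟨l, hl, hlen⟩ := exists_covering_walk hT.connected
    ⟨r, Set.mem_insert _ _⟩ ⟨s, Set.mem_insert_of_mem _ hsP⟩
  refine ⟨((l.map Subtype.val).filter (· ∈ P)).dedup, List.nodup_dedup _, fun a => ?_, ?_⟩
  · simp only [List.mem_dedup, List.mem_filter, List.mem_map, decide_eq_true_eq]
    exact ⟨fun h => h.2, fun h => ⟨⟨⟨a, Set.mem_insert_of_mem _ h⟩, hl _, rfl⟩, h⟩⟩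
  · rw [hw]
    refine (pathLength_le_of_sublist
      ((List.dedup_sublist _).trans List.filter_sublist)).trans ?_
    rw [pathLength_map_val]
    exact hlen

lemma SimpleGraph.Reachable.iff_of_forall_adj {V : Type*} {G : SimpleGraph V} {p : V → Prop}
    (h : ∀ u v, G.Adj u v → (p u ↔ p v)) {u v : V} (huv : G.Reachable u v) : p u ↔ p v := by
  obtain ⟨w⟩ := huv
  induction w with
  | nil => rfl
  | cons hadj _ ih => exact (h _ _ hadj).trans ih

/-- The subgraph of the path through the vertices in the order of `idx` that keeps the edges
whose ends have the same colour. -/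
def colouredPath {V : Type*} (idx : V → ℕ) (col : ℕ → ℕ) : SimpleGraph V where
  Adj u v := (idx u + 1 = idx v ∨ idx v + 1 = idx u) ∧ col (idx u) = col (idx v)
  symm := ⟨fun _ _ h => ⟨h.1.symm, h.2.symm⟩⟩
  loopless := ⟨fun _ h => by have := h.1; omega⟩

section ColouredPath

variable {V : Type*} {idx : V → ℕ} {col : ℕ → ℕ}

lemma colouredPath_isAcyclic (hidx : Function.Injective idx) :
    (colouredPath idx col).IsAcyclic := by
  rw [SimpleGraph.isAcyclic_iff_forall_adj_isBridge]
  have key : ∀ u v, idx u + 1 = idx v →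
      ¬ ((colouredPath idx col) \ SimpleGraph.fromEdgeSet {s(u, v)}).Reachable u v := by
    intro u v huv hreach
    have := hreach.iff_of_forall_adj (p := fun x => idx x ≤ idx u) (by
      intro x y hxy
      simp only [SimpleGraph.sdiff_adj, SimpleGraph.fromEdgeSet_adj, Set.mem_singleton_iff,
        not_and, not_not] at hxy
      obtain ⟨⟨h, -⟩, hne⟩ := hxy
      by_contra hcon
      have hcases : (idx x = idx u ∧ idx y = idx v) ∨ (idx x = idx v ∧ idx y = idx u) := by
        omega
      have hxy : x = y := hne (by
        rcases hcases with ⟨h1, h2⟩ | ⟨h1, h2⟩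
        · rw [hidx h1, hidx h2]
        · rw [hidx h1, hidx h2, Sym2.eq_swap])
      subst hxy
      omega)
    have := this.1 le_rfl
    omega
  intro u v huv
  rw [SimpleGraph.isBridge_iff]
  rcases huv.1 with h | h
  · exact key u v h
  · intro hr
    rw [Sym2.eq_swap] at hr
    exact key v u h hr.symm

lemma colouredPath_ncard_neighbors (hidx : Function.Injective idx) (v : V) :
    {u | (colouredPath idx col).Adj v u}.ncard ≤ 2 := by
  have hmap : idx '' {u | (colouredPath idx col).Adj v u} ⊆ {idx v + 1, idx v - 1} := by
    rintro _ ⟨u, hu, rfl⟩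
    have := hu.1
    simp only [Set.mem_insert_iff, Set.mem_singleton_iff]
    omega
  rw [← Set.ncard_image_of_injective _ hidx]
  exact (Set.ncard_le_ncard hmap (Set.toFinite _)).trans
    ((Set.ncard_insert_le _ _).trans (by rw [Set.ncard_singleton]))

lemma colouredPath_col_eq_of_reachable {u v : V} (h : (colouredPath idx col).Reachable u v) :
    col (idx u) = col (idx v) :=
  ((h.iff_of_forall_adj (p := fun x => col (idx x) = col (idx v))
    fun _ _ hxy => by rw [hxy.2]).2 rfl)

lemma colouredPath_reachable (hcol : Monotone col) (hidx : Function.Injective idx)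
    (hrange : ∀ v, ∀ i ≤ idx v, ∃ u, idx u = i) {u v : V} (h : col (idx u) = col (idx v)) :
    (colouredPath idx col).Reachable u v := by
  have key : ∀ (k : ℕ) (u v : V), idx u + k = idx v → col (idx u) = col (idx v) →
      (colouredPath idx col).Reachable u v := by
    intro k
    induction k with
    | zero =>
      intro u v huv _
      rw [hidx huv]
    | succ k ih =>
      intro u v huv hc
      obtain ⟨w, hw⟩ := hrange v (idx u + k) (by omega)
      have h1 : col (idx u) ≤ col (idx w) := hcol (by omega)
      have h2 : col (idx w) ≤ col (idx v) := hcol (by omega)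
      refine (ih u w hw.symm (by omega)).trans (SimpleGraph.Adj.reachable ?_)
      exact ⟨Or.inl (by omega), by omega⟩
  rcases le_total (idx u) (idx v) with hle | hle
  · exact key _ u v (Nat.add_sub_cancel' hle) h
  · exact (key _ v u (Nat.add_sub_cancel' hle) h.symm).symm

lemma colouredPath_card_components_le (hcol : Monotone col) (hidx : Function.Injective idx)
    (hrange : ∀ v, ∀ i ≤ idx v, ∃ u, idx u = i) (k : ℕ) (hk : ∀ v, col (idx v) < k) :
    Nat.card (colouredPath idx col).ConnectedComponent ≤ k := by
  let f : (colouredPath idx col).ConnectedComponent → Fin k :=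
    fun C => C.lift (fun v => ⟨col (idx v), hk v⟩)
      fun _ _ w _ => Fin.ext (colouredPath_col_eq_of_reachable ⟨w⟩)
  have hf : Function.Injective f := by
    intro C D
    refine C.ind fun u => D.ind fun v => ?_
    intro h
    exact SimpleGraph.ConnectedComponent.sound
      (colouredPath_reachable hcol hidx hrange (Fin.ext_iff.1 h))
  simpa using Nat.card_le_card_of_injective f hf

end ColouredPath

/-- The position along a path in which every step costs one more than its length. -/
noncomputable def paddedPosition (d : ℕ → ℝ) (i : ℕ) : ℝ :=
  ∑ j ∈ Finset.range i, (d j + 1)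

section PaddedPosition

variable {d : ℕ → ℝ}

lemma paddedPosition_sub {a b : ℕ} (hab : a ≤ b) :
    paddedPosition d b - paddedPosition d a = ∑ j ∈ Finset.Ico a b, (d j + 1) :=
  (Finset.sum_Ico_eq_sub _ hab).symm

lemma paddedPosition_mono (hd : ∀ j, 0 ≤ d j) : Monotone (paddedPosition d) :=
  monotone_nat_of_le_succ fun n => by
    rw [paddedPosition, paddedPosition, Finset.sum_range_succ]
    linarith [hd n]

lemma paddedPosition_nonneg (hd : ∀ j, 0 ≤ d j) (i : ℕ) : 0 ≤ paddedPosition d i :=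
  Finset.sum_nonneg fun j _ => add_nonneg (hd j) zero_le_one

lemma sub_lt_of_floor_div_eq {x y t : ℝ} (ht : 0 < t) (hx : 0 ≤ x)
    (h : ⌊x / t⌋₊ = ⌊y / t⌋₊) : y - x < t := by
  have h1 := Nat.floor_le (div_nonneg hx ht.le)
  have h2 := Nat.lt_floor_add_one (y / t)
  rw [h] at h1
  have : y / t - x / t < 1 := by linarith
  rwa [← sub_div, div_lt_one ht] at this

lemma sum_le_of_same_floor (hd : ∀ j, 0 ≤ d j) {t : ℝ} (ht : 0 < t) (c : ℕ) (J : Finset ℕ)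
    (hJ : ∀ j ∈ J, ⌊paddedPosition d j / t⌋₊ = c ∧ ⌊paddedPosition d (j + 1) / t⌋₊ = c) :
    ∑ j ∈ J, d j ≤ t := by
  rcases J.eq_empty_or_nonempty with rfl | hne
  · simpa using ht.le
  have hle := J.min'_le _ (J.max'_mem hne)
  have hsub : J ⊆ Finset.Ico (J.min' hne) (J.max' hne + 1) := fun j hj =>
    Finset.mem_Ico.2 ⟨J.min'_le j hj, Nat.lt_succ_of_le (J.le_max' j hj)⟩
  have hlt := sub_lt_of_floor_div_eq ht (paddedPosition_nonneg hd _)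
    ((hJ _ (J.min'_mem hne)).1.trans (hJ _ (J.max'_mem hne)).2.symm)
  rw [paddedPosition_sub (by omega)] at hlt
  refine le_trans ?_ hlt.le
  calc ∑ j ∈ J, d j ≤ ∑ j ∈ J, (d j + 1) := Finset.sum_le_sum fun j _ => by linarith
    _ ≤ _ := Finset.sum_le_sum_of_subset_of_nonneg hsub
        fun j _ _ => add_nonneg (hd j) zero_le_one

lemma card_le_of_same_floor (hd : ∀ j, 0 ≤ d j) {t : ℝ} (ht : 0 < t) (c : ℕ) (J : Finset ℕ)
    (hJ : ∀ j ∈ J, ⌊paddedPosition d j / t⌋₊ = c) : (J.card : ℝ) ≤ 1 + t := by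
  rcases J.eq_empty_or_nonempty with rfl | hne
  · simp only [Finset.card_empty, Nat.cast_zero]
    linarith
  have hle := J.min'_le _ (J.max'_mem hne)
  have hlt := sub_lt_of_floor_div_eq ht (paddedPosition_nonneg hd _)
    ((hJ _ (J.min'_mem hne)).trans (hJ _ (J.max'_mem hne)).symm)
  have hcard : J.card ≤ (Finset.Ico (J.min' hne) (J.max' hne)).card + 1 := by
    have hsub : J ⊆ insert (J.max' hne) (Finset.Ico (J.min' hne) (J.max' hne)) := by
      intro j hj
      have h1 := J.min'_le j hj
      have h2 := J.le_max' j hj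
      simp only [Finset.mem_insert, Finset.mem_Ico]
      omega
    exact (Finset.card_le_card hsub).trans (Finset.card_insert_le _ _)
  rw [paddedPosition_sub hle, Finset.sum_add_distrib] at hlt
  have h0 : 0 ≤ ∑ j ∈ Finset.Ico (J.min' hne) (J.max' hne), d j :=
    Finset.sum_nonneg fun j _ => hd j
  have hcard' : (J.card : ℝ) ≤ (Finset.Ico (J.min' hne) (J.max' hne)).card + 1 := by
    exact_mod_cast hcard
  simp only [Finset.sum_const, nsmul_eq_mul, mul_one] at hlt
  linarith

end PaddedPosition

/-- **Tour splitting.** Let `(M,c)` be a metric space, `r ∈ M`, `P ⊆ M`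
finite with `n ≥ 1` points, `s ∈ P` farthest from `r`, `MST` the minimum
length of a tree with vertex set `{r} ∪ P`, `ε > 0` and `0 < Δ ≤ MST`.
Then there is a graph on `P` that is a vertex-disjoint union of paths
(equivalently: acyclic with all degrees at most 2) such that
(a) it has at most `1 + (n + 2·MST − c(r,s))/(εΔ)` connected components,
(b) every component has total edge length at most `εΔ`,
(c) every component has at most `1 + εΔ` vertices, and
(d) the total edge length is at most `2·MST − c(r,s)`. -/
theorem tour_splitting {M : Type*} [MetricSpace M]
    (P : Finset M) (hP : P.Nonempty) (r : M) (s : M) (hsP : s ∈ P)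
    (hsmax : ∀ p ∈ P, dist r p ≤ dist r s)
    (ε Δ : ℝ) (hε : 0 < ε) (hΔ : 0 < Δ)
    (hΔMST : Δ ≤ mstOn (insert r ↑P : Set M)) :
    ∃ G : SimpleGraph ↥(↑P : Set M),
      G.IsAcyclic ∧
      (∀ v : ↥(↑P : Set M), {u | G.Adj v u}.ncard ≤ 2) ∧
      (Nat.card G.ConnectedComponent : ℝ) ≤
        1 + ((P.card : ℝ) + 2 * mstOn (insert r ↑P : Set M) - dist r s) / (ε * Δ) ∧
      (∀ C : G.ConnectedComponent,
        (∑ᶠ e ∈ {e ∈ G.edgeSet | ∀ v ∈ e, G.connectedComponentMk v = C},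
          pairDist e) ≤ ε * Δ) ∧
      (∀ C : G.ConnectedComponent,
        ({v | G.connectedComponentMk v = C}.ncard : ℝ) ≤ 1 + ε * Δ) ∧
      (∑ᶠ e ∈ G.edgeSet, pairDist e) ≤
        2 * mstOn (insert r ↑P : Set M) - dist r s := by
  classical
  have ht : 0 < ε * Δ := mul_pos hε hΔ
  obtain ⟨l, hnodup, hmem, hlen⟩ := exists_hamiltonian_list P r s hsP (hΔ.trans_le hΔMST)
  have hcard : l.length = P.card := by
    rw [← List.toFinset_card_of_nodup hnodup]
    congr 1
    ext a
    simp [hmem]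
  have hn : 0 < l.length := hcard ▸ hP.card_pos
  have hxP : ∀ i, l.getD i s ∈ (↑P : Set M) := by
    intro i
    rcases lt_or_ge i l.length with hi | hi
    · rw [List.getD_eq_getElem _ _ hi]
      exact (hmem _).1 (List.getElem_mem hi)
    · rwa [List.getD_eq_default _ _ hi]
  let x : ℕ → ↥(↑P : Set M) := fun i => ⟨l.getD i s, hxP i⟩
  let idx : ↥(↑P : Set M) → ℕ := fun v => l.idxOf (v : M)
  have hlt : ∀ v, idx v < l.length := fun v => List.idxOf_lt_length_of_mem ((hmem _).2 v.2)
  have hxidx : ∀ v, x (idx v) = v := by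
    intro v
    apply Subtype.ext
    change l.getD (l.idxOf (v : M)) s = v
    rw [List.getD_eq_getElem _ _ (hlt v), List.getElem_idxOf]
  have hidxx : ∀ i < l.length, idx (x i) = i := by
    intro i hi
    change l.idxOf (l.getD i s) = i
    rw [List.getD_eq_getElem _ _ hi, hnodup.idxOf_getElem]
  have hidx : Function.Injective idx := Function.LeftInverse.injective hxidx
  have hrange : ∀ v, ∀ i ≤ idx v, ∃ u, idx u = i := fun v i hi =>
    ⟨x i, hidxx i (hi.trans_lt (hlt v))⟩
  let d : ℕ → ℝ := fun j => pairDist s(x j, x (j + 1))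
  have hd : ∀ j, 0 ≤ d j := fun j => pairDist_nonneg _
  have hsum : ∑ j ∈ Finset.range (l.length - 1), d j ≤
      2 * mstOn (insert r ↑P : Set M) - dist r s := by
    rw [pathLength_eq_sum s] at hlen
    exact hlen
  let col : ℕ → ℕ := fun i => ⌊paddedPosition d i / (ε * Δ)⌋₊
  have hcol : Monotone col := fun i j hij =>
    Nat.floor_le_floor (div_le_div_of_nonneg_right (paddedPosition_mono hd hij) ht.le)
  have hedge : ∀ e ∈ (colouredPath idx col).edgeSet, ∃ j, j + 1 < l.length ∧
      col j = col (j + 1) ∧ s(x j, x (j + 1)) = e := by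
    intro e
    induction e with
    | _ u v =>
      intro h
      obtain ⟨h1 | h1, h2⟩ := (SimpleGraph.mem_edgeSet _).1 h
      · exact ⟨idx u, h1 ▸ hlt v, by rw [h1, h2], by rw [h1, hxidx, hxidx]⟩
      · exact ⟨idx v, h1 ▸ hlt u, by rw [h1, h2], by rw [h1, hxidx, hxidx, Sym2.eq_swap]⟩
  refine ⟨colouredPath idx col, colouredPath_isAcyclic hidx, colouredPath_ncard_neighbors hidx,
    ?_, ?_, ?_, ?_⟩
  · have hk := colouredPath_card_components_le hcol hidx hrange (col (l.length - 1) + 1)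
      fun v => Nat.lt_succ_of_le (hcol (Nat.le_sub_one_of_lt (hlt v)))
    have hk' : (Nat.card (colouredPath idx col).ConnectedComponent : ℝ) ≤
        col (l.length - 1) + 1 := by exact_mod_cast hk
    have hfl : (col (l.length - 1) : ℝ) ≤ paddedPosition d (l.length - 1) / (ε * Δ) :=
      Nat.floor_le (div_nonneg (paddedPosition_nonneg hd _) ht.le)
    have hW : paddedPosition d (l.length - 1) ≤
        (P.card : ℝ) + 2 * mstOn (insert r ↑P : Set M) - dist r s := by
      rw [paddedPosition, Finset.sum_add_distrib]
      have : ((l.length - 1 : ℕ) : ℝ) ≤ P.card := by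
        rw [← hcard]
        exact_mod_cast Nat.sub_le _ _
      simp only [Finset.sum_const, nsmul_eq_mul, mul_one, Finset.card_range]
      linarith
    have := div_le_div_of_nonneg_right hW ht.le
    linarith
  · intro C
    induction C using SimpleGraph.ConnectedComponent.ind with
    | _ w =>
    refine (finsum_pairDist_le_sum
      ((Finset.range l.length).filter fun j => col j = col (idx w) ∧ col (j + 1) = col (idx w))
      (fun j => s(x j, x (j + 1))) _ ?_).trans
      (sum_le_of_same_floor hd ht (col (idx w)) _ fun j hj => (Finset.mem_filter.1 hj).2)
    rintro e ⟨he, hC⟩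
    obtain ⟨j, hj, hjc, rfl⟩ := hedge e he
    have := colouredPath_col_eq_of_reachable
      (SimpleGraph.ConnectedComponent.exact (hC (x j) (Sym2.mem_mk_left _ _)))
    rw [hidxx j (by omega)] at this
    exact ⟨j, by simp only [Finset.mem_filter, Finset.mem_range]; omega, rfl⟩
  · intro C
    induction C using SimpleGraph.ConnectedComponent.ind with
    | _ w =>
    have hsub : idx '' {v | (colouredPath idx col).connectedComponentMk v =
        (colouredPath idx col).connectedComponentMk w} ⊆
        ↑((Finset.range l.length).filter fun j => col j = col (idx w)) := by
      rintro _ ⟨v, hv, rfl⟩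
      have := colouredPath_col_eq_of_reachable (SimpleGraph.ConnectedComponent.exact hv)
      simpa using ⟨hlt v, this⟩
    have hle := Set.ncard_le_ncard hsub (Finset.finite_toSet _)
    rw [Set.ncard_image_of_injective _ hidx, Set.ncard_coe_finset] at hle
    exact (Nat.cast_le.2 hle).trans
      (card_le_of_same_floor hd ht (col (idx w)) _ fun j hj => (Finset.mem_filter.1 hj).2)
  · refine (finsum_pairDist_le_sum (Finset.range (l.length - 1))
      (fun j => s(x j, x (j + 1))) _ fun e he => ?_).trans hsum
    obtain ⟨j, hj, -, hje⟩ := hedge e he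
    exact ⟨j, Finset.mem_range.2 (by omega), hje⟩
end
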